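/- arXiv:1702.05480 — 2 statements merged into one kernel-verified Lean document; each statement's English description precedes it below -/
import Mathlib

section
/- Let I ⊆ S = ℂ[x_0,…,x_n] be a homogeneous ideal such that the Krull dimension of S/I equals d, and let w_1,…,w_d ∈ ℤ^{n+1} be linearly independent vectors, assembled as the rows of a d×(n+1) integer matrix W. Suppose there exists w ∈ ℝ^{n+1} such that J := init_w(I) satisfies init_{w_i}(J) = J for every 1 ≤ i ≤ d (i.e. J is homogeneous with respect to the ℤ^d-grading given by W), and suppose J is a prime ideal generated by binomials that contains no monomials. Let L = {ℓ ∈ ℤ^{n+1} : Wℓ = 0}, and for ℓ ∈ L write ℓ = ℓ⁺ − ℓ⁻ where ℓ⁺, ℓ⁻ ∈ ℕ^{n+1} are the positive and negative parts of ℓ. Then there exist nonzero constants c_ℓ ∈ ℂ for ℓ ∈ L such that J = ⟨x^{ℓ⁺} − c_ℓ x^{ℓ⁻} : ℓ ∈ L⟩. -/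
open MvPolynomial

/-- The weight of a monomial exponent `u` with respect to a weight vector `w`. -/
noncomputable def wt {N : ℕ} (w : Fin N → ℝ) (u : Fin N →₀ ℕ) : ℝ :=
  ∑ i, w i * (u i : ℝ)

open Classical in
/-- The initial form of a polynomial `f` with respect to a weight vector `w`:
the sum of the terms whose weight is minimal among the terms of `f`. -/
noncomputable def initialForm {N : ℕ} (w : Fin N → ℝ) (f : MvPolynomial (Fin N) ℂ) :
    MvPolynomial (Fin N) ℂ :=
  ∑ u ∈ f.support, if ∀ v ∈ f.support, wt w u ≤ wt w v then monomial u (coeff u f) else 0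

/-- The initial ideal of `I` with respect to a weight vector `w`. -/
noncomputable def initialIdeal {N : ℕ} (w : Fin N → ℝ) (I : Ideal (MvPolynomial (Fin N) ℂ)) :
    Ideal (MvPolynomial (Fin N) ℂ) :=
  Ideal.span {g | ∃ f ∈ I, f ≠ 0 ∧ g = initialForm w f}


lemma dim_ge_of_integral {A B : Type*} [CommRing A] [CommRing B] (f : A →+* B)
    (hf : Function.Injective f) (hi : f.IsIntegral) : ringKrullDim A ≤ ringKrullDim B := by
  algebraize [f]
  have : Algebra.IsIntegral A B := ⟨hi⟩
  unfold ringKrullDim Order.krullDim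
  refine iSup_le fun l => ?_
  obtain ⟨Q, -, hQ, hQc⟩ := Ideal.exists_ideal_over_prime_of_isIntegral (S := B)
    (RelSeries.head l).asIdeal ⊥ (by
      intro x hx
      have h1 : f x = 0 := hx
      have : x = 0 := hf (by rw [h1, map_zero])
      simp [this])
  have : Q.LiesOver (RelSeries.head l).asIdeal := ⟨hQc.symm⟩
  obtain ⟨L, hL, -, -⟩ := Ideal.exists_ltSeries_of_hasGoingUp l Q
  rw [← hL]
  exact le_iSup (fun p : LTSeries (PrimeSpectrum B) => ((p.length : ℕ∞) : WithBot ℕ∞)) L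

lemma dim_ge_domain {R : Type} [CommRing R] [IsDomain R] [Algebra ℂ R] [Algebra.FiniteType ℂ R]
    {κ : Type} [Finite κ] (φ : MvPolynomial κ ℂ →ₐ[ℂ] R) (hφ : Function.Injective φ) :
    ((Nat.card κ : ℕ) : WithBot ℕ∞) ≤ ringKrullDim R := by
  obtain ⟨s, g, hg, hgi⟩ := exists_integral_inj_algHom_of_fg ℂ R
  have h1 := dim_ge_of_integral g.toRingHom hg hgi
  rw [MvPolynomial.ringKrullDim_of_isNoetherianRing, ringKrullDim_eq_zero_of_field, zero_add,
    Nat.card_fin] at h1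
  refine le_trans ?_ h1
  have h2 := trdeg_le_of_injective φ hφ
  rw [MvPolynomial.trdeg_of_isDomain] at h2
  have h3 : Algebra.trdeg ℂ R = s := by
    let _ := g.toRingHom.toAlgebra
    have : Algebra.IsIntegral (MvPolynomial (Fin s) ℂ) R := ⟨hgi⟩
    have : IsScalarTower ℂ (MvPolynomial (Fin s) ℂ) R := IsScalarTower.of_algebraMap_eq
      fun x => (g.commutes x).symm
    have : FaithfulSMul (MvPolynomial (Fin s) ℂ) R := (faithfulSMul_iff_algebraMap_injective _ _).2 hg
    have : Algebra.IsAlgebraic (MvPolynomial (Fin s) ℂ) R := inferInstance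
    rw [← trdeg_add_eq ℂ (MvPolynomial (Fin s) ℂ) (A := R),
      MvPolynomial.trdeg_of_isDomain, _root_.trdeg_eq_zero]
    simp
  rw [h3] at h2
  have h4 : Nat.card κ ≤ s := by
    rw [← Nat.cast_card] at h2
    simpa using h2
  exact_mod_cast h4

lemma dim_ge {R : Type} [CommRing R] [Algebra ℂ R] [Algebra.FiniteType ℂ R]
    {κ : Type} [Finite κ] (φ : MvPolynomial κ ℂ →ₐ[ℂ] R) (hφ : Function.Injective φ) :
    ((Nat.card κ : ℕ) : WithBot ℕ∞) ≤ ringKrullDim R := by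
  obtain ⟨P, hP, -, hd⟩ := Ideal.exists_le_prime_disjoint (⊥ : Ideal R)
    ((nonZeroDivisors (MvPolynomial κ ℂ)).map φ) (by
      rw [Set.disjoint_left]
      rintro x hx ⟨y, hy, rfl⟩
      have : φ y = 0 := by simpa using hx
      have : y = 0 := hφ (by rw [this, map_zero])
      exact nonZeroDivisors.ne_zero hy this)
  refine le_trans ?_ (ringKrullDim_quotient_le P)
  refine dim_ge_domain ((Ideal.Quotient.mkₐ ℂ P).comp φ) ?_
  rw [injective_iff_map_eq_zero]
  intro y hy
  by_contra hne
  have : φ y ∈ P := by simpa [Ideal.Quotient.eq_zero_iff_mem] using hy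
  exact Set.disjoint_left.1 hd this ⟨y, mem_nonZeroDivisors_of_ne_zero hne, rfl⟩

lemma coeff_initialForm {N : ℕ} (w : Fin N → ℝ) (f : MvPolynomial (Fin N) ℂ) (u : Fin N →₀ ℕ)
    (hu : u ∈ f.support) (hm : ∀ v ∈ f.support, wt w u ≤ wt w v) :
    coeff u (initialForm w f) = coeff u f := by
  classical
  unfold initialForm
  rw [coeff_sum, Finset.sum_eq_single u]
  · rw [if_pos hm]; simp
  · intro b _ hb
    split_ifs
    · rw [coeff_monomial, if_neg hb]
    · simp
  · exact fun h => absurd hu h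

lemma coeff_initialForm_zero {N : ℕ} (w : Fin N → ℝ) (f : MvPolynomial (Fin N) ℂ) (u : Fin N →₀ ℕ)
    (h : ¬ (u ∈ f.support ∧ ∀ v ∈ f.support, wt w u ≤ wt w v)) :
    coeff u (initialForm w f) = 0 := by
  classical
  unfold initialForm
  rw [coeff_sum]
  refine Finset.sum_eq_zero fun b hb => ?_
  split_ifs with h1
  · rw [coeff_monomial, if_neg]
    rintro rfl
    exact h ⟨hb, h1⟩
  · simp

lemma support_initialForm {N : ℕ} (w : Fin N → ℝ) (f : MvPolynomial (Fin N) ℂ) :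
    (initialForm w f).support ⊆ f.support := by
  intro u hu
  by_contra h
  exact (mem_support_iff.1 hu) (coeff_initialForm_zero w f u (fun h' => h h'.1))

lemma initialForm_ne_zero {N : ℕ} (w : Fin N → ℝ) (f : MvPolynomial (Fin N) ℂ) (hf : f ≠ 0) :
    initialForm w f ≠ 0 := by
  obtain ⟨u, hu, hm⟩ := Finset.exists_min_image f.support (wt w) (support_nonempty.2 hf)
  intro h
  have := coeff_initialForm w f u hu hm
  rw [h, coeff_zero] at this
  exact mem_support_iff.1 hu this.symm

/-- a binomial in `J` is homogeneous -/
lemma wt_eq_of_binomial {N : ℕ} (w : Fin N → ℝ) (J : Ideal (MvPolynomial (Fin N) ℂ))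
    (hJ : initialIdeal w J ≤ J) (hnomon : ∀ u : Fin N →₀ ℕ, ∀ a : ℂ, monomial u a ∈ J → a = 0)
    (u v : Fin N →₀ ℕ) (a b : ℂ) (hb : b ≠ 0)
    (h : monomial u a + monomial v b ∈ J) : wt w u ≤ wt w v := by
  classical
  by_contra! hlt
  have huv : u ≠ v := by rintro rfl; exact lt_irrefl _ hlt
  set f := monomial u a + monomial v b with hf
  have hs : ∀ z, coeff z f = (if u = z then a else 0) + (if v = z then b else 0) := by
    intro z; simp [hf, coeff_monomial]
  have hv : v ∈ f.support := by rw [mem_support_iff, hs]; simp [huv, hb]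
  have hsup : ∀ z ∈ f.support, z = u ∨ z = v := by
    intro z hz
    rw [mem_support_iff, hs] at hz
    by_contra! hc
    simp [hc.1.symm, hc.2.symm] at hz
  have hin : initialForm w f = monomial v b := by
    ext z
    by_cases hz : v = z
    · subst hz
      rw [coeff_initialForm w f v hv, hs]
      · simp [huv]
      · intro z hz
        rcases hsup z hz with rfl | rfl
        · exact hlt.le
        · exact le_rfl
    · rw [coeff_initialForm_zero]
      · simp [coeff_monomial, hz]
      · rintro ⟨h1, h2⟩
        rcases hsup z h1 with rfl | rfl
        · exact absurd (h2 v hv) (not_le.2 hlt)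
        · exact hz rfl
  have : monomial v b ∈ J := by
    rw [← hin]
    refine hJ (Ideal.subset_span ⟨f, h, ?_, rfl⟩)
    rintro h0
    simp [h0] at hv
  exact hb (hnomon v b this)

lemma binomial_cases {N : ℕ} (J : Ideal (MvPolynomial (Fin N) ℂ))
    (hnomon : ∀ u : Fin N →₀ ℕ, ∀ a : ℂ, monomial u a ∈ J → a = 0)
    (f : MvPolynomial (Fin N) ℂ) (hf : f ∈ J) (hc : f.support.card ≤ 2) :
    f = 0 ∨ ∃ u v a b, a ≠ 0 ∧ b ≠ 0 ∧ f = monomial u a + monomial v b := by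
  classical
  have h3 : f.support.card = 0 ∨ f.support.card = 1 ∨ f.support.card = 2 := by omega
  rcases h3 with h | h | h
  · left; simpa using h
  · left
    obtain ⟨u, hu⟩ := Finset.card_eq_one.1 h
    have := f.as_sum
    rw [hu, Finset.sum_singleton] at this
    have h0 := hnomon u _ (this ▸ hf)
    rw [this, h0, map_zero]
  · right
    obtain ⟨u, v, huv, hu⟩ := Finset.card_eq_two.1 h
    have h4 := f.as_sum
    rw [hu, Finset.sum_pair huv] at h4
    exact ⟨u, v, _, _, mem_support_iff.1 (by rw [hu]; simp), mem_support_iff.1 (by rw [hu]; simp), h4⟩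

section
variable {N : ℕ} {K : Type} [Field K] [Algebra ℂ K]

/-- Laurent monomial -/
noncomputable def lm (y : Fin N → K) (ℓ : Fin N → ℤ) : K := ∏ j, y j ^ ℓ j

lemma lm_add (y : Fin N → K) (hy : ∀ j, y j ≠ 0) (a b : Fin N → ℤ) :
    lm y (a + b) = lm y a * lm y b := by
  unfold lm
  rw [← Finset.prod_mul_distrib]
  exact Finset.prod_congr rfl fun j _ => zpow_add₀ (hy j) _ _

lemma lm_smul (y : Fin N → K) (k : ℤ) (a : Fin N → ℤ) :
    lm y (k • a) = lm y a ^ k := by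
  unfold lm
  rw [← Finset.prod_zpow]
  refine Finset.prod_congr rfl fun j _ => ?_
  rw [Pi.smul_apply, smul_eq_mul, mul_comm, zpow_mul]

lemma lm_ne (y : Fin N → K) (hy : ∀ j, y j ≠ 0) (a : Fin N → ℤ) : lm y a ≠ 0 :=
  Finset.prod_ne_zero_iff.2 fun j _ => zpow_ne_zero _ (hy j)

lemma lm_nat (ψ : MvPolynomial (Fin N) ℂ →ₐ[ℂ] K) (u : Fin N →₀ ℕ) (a : ℂ) :
    ψ (monomial u a) = algebraMap ℂ K a * lm (fun j => ψ (X j)) (fun j => (u j : ℤ)) := by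
  conv_lhs => rw [MvPolynomial.aeval_unique ψ]
  rw [aeval_monomial]
  simp [lm, Finsupp.prod_fintype]

lemma binom_iff (ψ : MvPolynomial (Fin N) ℂ →ₐ[ℂ] K) (hy : ∀ j, ψ (X j) ≠ 0) (u v : Fin N →₀ ℕ)
    (ℓ : Fin N → ℤ) (hℓ : ∀ j, ℓ j = u j - v j) (a b : ℂ) (ha : a ≠ 0) :
    ψ (monomial u a + monomial v b) = 0 ↔ lm (fun j => ψ (X j)) ℓ = algebraMap ℂ K (-b / a) := by
  have h1 : lm (fun j => ψ (X j)) (fun j => (u j : ℤ)) =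
      lm (fun j => ψ (X j)) ℓ * lm (fun j => ψ (X j)) (fun j => (v j : ℤ)) := by
    rw [← lm_add _ hy]
    congr 1
    ext j; simp [hℓ]
  have hv := lm_ne _ hy (fun j => (v j : ℤ))
  have ha' : algebraMap ℂ K a ≠ 0 := by simpa using ha
  rw [map_add, lm_nat, lm_nat, h1, map_div₀, map_neg, eq_div_iff ha']
  constructor
  · intro h
    have : (lm (fun j => ψ (X j)) ℓ * algebraMap ℂ K a + algebraMap ℂ K b) *
      lm (fun j => ψ (X j)) (fun j => (v j : ℤ)) = 0 := by rw [← h]; ring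
    have := (mul_eq_zero.1 this).resolve_right hv
    linear_combination this
  · intro h
    linear_combination lm (fun j => ψ (X j)) (fun j => (v j : ℤ)) * h

/-- saturated rational span -/
noncomputable def HQ (y : Fin N → K) (hy : ∀ j, y j ≠ 0) : Submodule ℚ (Fin N → ℚ) where
  carrier := {x | ∃ k : ℕ, 0 < k ∧ ∃ ℓ : Fin N → ℤ, (∃ c : ℂ, lm y ℓ = algebraMap ℂ K c) ∧
    ∀ j, (k : ℚ) * x j = ℓ j}
  zero_mem' := ⟨1, one_pos, 0, ⟨1, by simp [lm]⟩, by simp⟩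
  add_mem' := by
    rintro x x' ⟨k, hk, ℓ, ⟨c, hc⟩, h⟩ ⟨k', hk', ℓ', ⟨c', hc'⟩, h'⟩
    refine ⟨k * k', Nat.mul_pos hk hk', (k' : ℤ) • ℓ + (k : ℤ) • ℓ', ⟨c ^ k' * c' ^ k, ?_⟩, ?_⟩
    · rw [lm_add _ hy, lm_smul, lm_smul, hc, hc']
      simp
    · intro j
      simp only [Pi.add_apply, Pi.smul_apply, smul_eq_mul]
      push_cast
      rw [← h, ← h']; ring
  smul_mem' := by
    rintro q x ⟨k, hk, ℓ, ⟨c, hc⟩, h⟩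
    refine ⟨q.den * k, Nat.mul_pos q.den_pos hk, q.num • ℓ, ⟨c ^ q.num, ?_⟩, ?_⟩
    · rw [lm_smul, hc, map_zpow₀]
    · intro j
      simp only [Pi.smul_apply, smul_eq_mul]
      push_cast
      rw [← h]
      have : (q.den : ℚ) * q = q.num := Rat.den_mul_eq_num q
      linear_combination ((k:ℚ) * x j) * this

lemma mem_HQ_int (y : Fin N → K) (hy : ∀ j, y j ≠ 0) (ℓ : Fin N → ℤ) :
    (fun j => (ℓ j : ℚ)) ∈ HQ y hy ↔ ∃ c : ℂ, lm y ℓ = algebraMap ℂ K c := by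
  constructor
  · rintro ⟨k, hk, ℓ', ⟨c, hc⟩, h⟩
    have : ℓ' = (k : ℤ) • ℓ := by
      ext j
      have h2 : (k : ℚ) * (ℓ j : ℚ) = (ℓ' j : ℚ) := h j
      simp only [Pi.smul_apply, smul_eq_mul]
      exact_mod_cast h2.symm
    rw [this, lm_smul, zpow_natCast] at hc
    have hint : IsIntegral ℂ (lm y ℓ) := by
      refine IsIntegral.of_pow hk ?_
      rw [hc]; exact isIntegral_algebraMap
    have hd := IsAlgClosed.degree_eq_one_of_irreducible ℂ (minpoly.irreducible hint)
    obtain ⟨c, hc⟩ := minpoly.mem_range_of_degree_eq_one ℂ _ hd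
    exact ⟨c, hc.symm⟩
  · rintro h
    exact ⟨1, one_pos, ℓ, h, by simp⟩

end

section
variable {N : ℕ} {K : Type} [Field K] [Algebra ℂ K] {V : Type} [AddCommGroup V] [Module ℚ V]

/-- grading coaction -/
noncomputable def Phi (ψ : MvPolynomial (Fin N) ℂ →ₐ[ℂ] K) (π : (Fin N → ℚ) →ₗ[ℚ] V) :
    MvPolynomial (Fin N) ℂ →+* AddMonoidAlgebra K V :=
  eval₂Hom (AddMonoidAlgebra.singleZeroRingHom.comp (algebraMap ℂ K))
    (fun i => AddMonoidAlgebra.single (π (Pi.single i 1)) (ψ (X i)))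

lemma Phi_monomial_one (ψ : MvPolynomial (Fin N) ℂ →ₐ[ℂ] K) (π : (Fin N → ℚ) →ₗ[ℚ] V)
    (u : Fin N →₀ ℕ) :
    Phi ψ π (monomial u 1) =
      AddMonoidAlgebra.single (π (fun j => (u j : ℚ))) (ψ (monomial u 1)) := by
  classical
  induction u using Finsupp.induction_linear with
  | zero =>
    have h0 : (fun j : Fin N => (((0 : Fin N →₀ ℕ) j : ℕ) : ℚ)) = 0 := by ext j; simp
    have h1 : (monomial (0 : Fin N →₀ ℕ)) (1 : ℂ) = 1 := rfl
    rw [h0, h1, map_one, map_one, map_zero]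
    rfl
  | add u v hu hv =>
    have h0 : (fun j : Fin N => (((u + v) j : ℕ) : ℚ)) =
      (fun j => (u j : ℚ)) + (fun j => (v j : ℚ)) := by ext j; simp
    have h1 : (monomial (u + v)) (1 : ℂ) = monomial u 1 * monomial v 1 := by
      rw [monomial_mul, one_mul]
    rw [h0, h1, map_mul, map_mul, hu, hv, AddMonoidAlgebra.single_mul_single, map_add]
  | single i k =>
    have h0 : (fun j : Fin N => (((Finsupp.single i k) j : ℕ) : ℚ)) =
      k • (Pi.single i 1 : Fin N → ℚ) := by
      ext j
      by_cases h : i = j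
      · subst h; simp
      · simp [Finsupp.single_apply, h, Pi.single_apply, Ne.symm h]
    have h1 : (monomial (Finsupp.single i k)) (1 : ℂ) = X i ^ k := (X_pow_eq_monomial).symm
    rw [h0, h1, map_pow, map_pow, map_nsmul, ← AddMonoidAlgebra.single_pow]
    congr 1
    simp [Phi]

lemma Phi_monomial (ψ : MvPolynomial (Fin N) ℂ →ₐ[ℂ] K) (π : (Fin N → ℚ) →ₗ[ℚ] V)
    (u : Fin N →₀ ℕ) (a : ℂ) :
    Phi ψ π (monomial u a) =
      AddMonoidAlgebra.single (π (fun j => (u j : ℚ))) (ψ (monomial u a)) := by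
  have h : monomial u a = C a * monomial u 1 := by simp [C_mul_monomial]
  have hC : ψ (C a) = algebraMap ℂ K a := ψ.commutes a
  rw [h, map_mul, map_mul, Phi_monomial_one, hC]
  have : Phi ψ π (C a) = AddMonoidAlgebra.single 0 (algebraMap ℂ K a) := by
    simp [Phi]
  rw [this, AddMonoidAlgebra.single_mul_single, zero_add]

lemma graded_zero (J : Ideal (MvPolynomial (Fin N) ℂ)) (ψ : MvPolynomial (Fin N) ℂ →ₐ[ℂ] K)
    (hψ : ∀ f, ψ f = 0 ↔ f ∈ J)
    (hnomon : ∀ u : Fin N →₀ ℕ, ∀ a : ℂ, monomial u a ∈ J → a = 0)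
    (hy : ∀ j, ψ (X j) ≠ 0)
    (S : Set (MvPolynomial (Fin N) ℂ)) (hS : J = Ideal.span S) (hS2 : ∀ f ∈ S, f.support.card ≤ 2)
    (π : (Fin N → ℚ) →ₗ[ℚ] V) (hπ : HQ _ hy ≤ LinearMap.ker π)
    (f : MvPolynomial (Fin N) ℂ) (hf : f ∈ J)
    (hinj : ∀ u ∈ f.support, ∀ v ∈ f.support,
      π (fun j => (u j : ℚ)) = π (fun j => (v j : ℚ)) → u = v) : f = 0 := by
  classical
  have hker : J ≤ RingHom.ker (Phi ψ π) := by
    rw [hS, Ideal.span_le]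
    intro g hg
    have hgJ : g ∈ J := hS ▸ Ideal.subset_span hg
    rcases binomial_cases J hnomon g hgJ (hS2 g hg) with rfl | ⟨u, v, a, b, ha, hb, rfl⟩
    · simp
    · have h0 := (hψ _).2 hgJ
      have h1 := (binom_iff ψ hy u v (fun j => u j - v j) (fun j => rfl) a b ha).1 h0
      have h2 := hπ ((mem_HQ_int _ hy _).2 ⟨_, h1⟩)
      have h3 : π (fun j => (u j : ℚ)) = π (fun j => (v j : ℚ)) := by
        rw [← sub_eq_zero, ← map_sub]
        rw [LinearMap.mem_ker] at h2
        rw [← h2]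
        congr 1
        ext j; simp
      change Phi ψ π _ = 0
      rw [map_add, Phi_monomial, Phi_monomial, h3, ← AddMonoidAlgebra.single_add, ← map_add, h0]
      simp
  have h0 : Phi ψ π f = 0 := hker hf
  by_contra hne
  obtain ⟨u, hu⟩ := support_nonempty.2 hne
  have h1 : (Phi ψ π f).coeff (π (fun j => (u j : ℚ))) = ψ (monomial u (coeff u f)) := by
    conv_lhs => rw [f.as_sum, map_sum]
    simp only [Phi_monomial]
    rw [AddMonoidAlgebra.coeff_sum, Finsupp.finset_sum_apply, Finset.sum_eq_single u]
    · simp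
    · intro v hv hvu
      rw [AddMonoidAlgebra.coeff_single, Finsupp.single_apply, if_neg]
      exact fun h => hvu (hinj v hv u hu h)
    · exact fun h => absurd hu h
  rw [h0] at h1
  have h2 : ψ (monomial u (coeff u f)) = 0 := by rw [← h1]; simp
  exact mem_support_iff.1 hu (hnomon _ _ ((hψ _).1 h2))

end

lemma finrank_le_dim {N : ℕ} {K : Type} [Field K] [Algebra ℂ K]
    (I J : Ideal (MvPolynomial (Fin N) ℂ)) (w : Fin N → ℝ) (hJI : J = initialIdeal w I)
    (ψ : MvPolynomial (Fin N) ℂ →ₐ[ℂ] K) (hψ : ∀ f, ψ f = 0 ↔ f ∈ J)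
    (hnomon : ∀ u : Fin N →₀ ℕ, ∀ a : ℂ, monomial u a ∈ J → a = 0)
    (hy : ∀ j, ψ (X j) ≠ 0)
    (S : Set (MvPolynomial (Fin N) ℂ)) (hS : J = Ideal.span S)
    (hS2 : ∀ f ∈ S, f.support.card ≤ 2) :
    ((Module.finrank ℚ ((Fin N → ℚ) ⧸ HQ _ hy) : ℕ) : WithBot ℕ∞) ≤
      ringKrullDim (MvPolynomial (Fin N) ℂ ⧸ I) := by
  classical
  set π := (HQ _ hy).mkQ with hπ
  obtain ⟨κ, a, hai, hsp, hli⟩ := exists_linearIndependent' ℚ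
    (fun i : Fin N => π (Pi.single i (1 : ℚ)))
  have hfin : Finite κ := Finite.of_injective a hai
  cases nonempty_fintype κ
  have htop : ⊤ ≤ Submodule.span ℚ (Set.range (fun i : Fin N => π (Pi.single i (1 : ℚ)))) := by
    rw [← LinearMap.range_eq_top.2 (Submodule.mkQ_surjective (HQ _ hy)), LinearMap.range_eq_map,
      ← (Pi.basisFun ℚ (Fin N)).span_eq, Submodule.map_span, ← Set.range_comp]
    apply Submodule.span_mono
    rintro _ ⟨i, rfl⟩
    exact ⟨i, by simp [hπ]⟩
  rw [← hsp] at htop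
  have hcard : Module.finrank ℚ ((Fin N → ℚ) ⧸ HQ _ hy) = Nat.card κ := by
    rw [Module.finrank_eq_nat_card_basis (Module.Basis.mk hli htop)]
  rw [hcard]
  have hpi : ∀ u : κ →₀ ℕ, π (fun j => ((Finsupp.mapDomain a u) j : ℚ)) =
      ∑ k, (u k : ℚ) • π (Pi.single (a k) (1 : ℚ)) := by
    intro u
    rw [← Finsupp.sum_fintype u (fun k n => (n : ℚ) • π (Pi.single (a k) (1 : ℚ))) (by simp)]
    induction u using Finsupp.induction_linear with
    | zero =>
      rw [Finsupp.mapDomain_zero, Finsupp.sum_zero_index, ← map_zero π]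
      congr 1 <;> first | done | (ext j; simp)
    | add u v hu hv =>
      rw [Finsupp.sum_add_index' (by simp) (by intros; push_cast; rw [add_smul]), ← hu, ← hv,
        ← map_add]
      congr 1; ext j; simp [Finsupp.mapDomain_add]
    | single k n =>
      rw [Finsupp.sum_single_index (by simp), ← map_smul, Finsupp.mapDomain_single]
      congr 1; ext j
      by_cases h : a k = j
      · subst h; simp
      · simp [Finsupp.single_apply, h, Pi.single_apply, Ne.symm h]
  have hinj : ∀ u v : κ →₀ ℕ, π (fun j => ((Finsupp.mapDomain a u) j : ℚ)) =
      π (fun j => ((Finsupp.mapDomain a v) j : ℚ)) → u = v := by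
    intro u v h
    rw [hpi, hpi, ← sub_eq_zero, ← Finset.sum_sub_distrib] at h
    simp only [← sub_smul] at h
    have := Fintype.linearIndependent_iff.1 hli (fun k => (u k : ℚ) - v k) h
    ext k
    have h2 := this k
    have : (u k : ℚ) = v k := by linarith
    exact_mod_cast this
  refine dim_ge ((Ideal.Quotient.mkₐ ℂ I).comp (rename a)) ?_
  rw [injective_iff_map_eq_zero]
  intro g hg
  have hgI : rename a g ∈ I := by simpa [Ideal.Quotient.eq_zero_iff_mem] using hg
  by_contra hne
  have hne' : rename a g ≠ 0 := fun h => hne (rename_injective a hai (by rw [h, map_zero]))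
  have hin : initialForm w (rename a g) ∈ J := hJI ▸ Ideal.subset_span ⟨_, hgI, hne', rfl⟩
  refine initialForm_ne_zero w _ hne' (graded_zero J ψ hψ hnomon hy S hS hS2 π
    (by rw [hπ, Submodule.ker_mkQ]) _ hin ?_)
  intro u hu v hv h
  have hu := support_initialForm w _ hu
  have hv := support_initialForm w _ hv
  rw [support_rename_of_injective hai, Finset.mem_image] at hu hv
  obtain ⟨u', -, rfl⟩ := hu
  obtain ⟨v', -, rfl⟩ := hv
  rw [hinj u' v' h]

lemma finrank_ker {N d : ℕ} (W : Fin d → Fin N → ℤ) (hW : LinearIndependent ℤ W) :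
    Module.finrank ℚ (LinearMap.ker
      (Matrix.mulVecLin (Matrix.of fun i j => (W i j : ℚ)))) + d = N := by
  have h1 : LinearIndependent ℚ (fun i => fun j => (W i j : ℚ)) := by
    rw [← LinearIndependent.iff_fractionRing ℤ ℚ]
    rw [Fintype.linearIndependent_iff] at hW ⊢
    intro g hg
    apply hW g
    ext j
    have := congrFun hg j
    simp only [Finset.sum_apply, Pi.smul_apply, Pi.zero_apply] at this ⊢
    rw [← Int.cast_inj (α := ℚ)]
    push_cast
    simpa using this
  have h2 : (Matrix.of fun i j => (W i j : ℚ)).rank = d := by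
    rw [LinearIndependent.rank_matrix (M := Matrix.of fun i j => (W i j : ℚ)) h1, Fintype.card_fin]
  have h3 := LinearMap.finrank_range_add_finrank_ker
    (Matrix.mulVecLin (Matrix.of fun i j => (W i j : ℚ)))
  rw [Module.finrank_fin_fun] at h3
  have h4 : Module.finrank ℚ (LinearMap.range
    (Matrix.mulVecLin (Matrix.of fun i j => (W i j : ℚ)))) = d := h2
  omega

/-- If `J = init_w(I)` is a binomial prime ideal with no monomials that is homogeneous with
respect to the grading given by a matrix `W` with linearly independent rows `w_1, …, w_d`
(`d` the Krull dimension of `S/I`), then `J` is the lattice ideal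
`⟨x^{ℓ⁺} − c_ℓ x^{ℓ⁻} : ℓ ∈ L⟩` for the lattice `L = ker W` and suitable nonzero
constants `c_ℓ`. -/
theorem initialIdeal_eq_lattice_ideal
    (n d : ℕ) (I : Ideal (MvPolynomial (Fin (n + 1)) ℂ))
    (hhom : ∀ f ∈ I, ∀ k : ℕ, MvPolynomial.homogeneousComponent k f ∈ I)
    (hdim : ringKrullDim (MvPolynomial (Fin (n + 1)) ℂ ⧸ I) = (d : ℕ))
    (W : Fin d → Fin (n + 1) → ℤ) (hW : LinearIndependent ℤ W)
    (J : Ideal (MvPolynomial (Fin (n + 1)) ℂ))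
    (hJ : ∃ w : Fin (n + 1) → ℝ, J = initialIdeal w I)
    (hJW : ∀ i : Fin d, initialIdeal (fun j => (W i j : ℝ)) J = J)
    (hprime : J.IsPrime)
    (hbin : ∃ S : Set (MvPolynomial (Fin (n + 1)) ℂ),
      J = Ideal.span S ∧ ∀ f ∈ S, f.support.card ≤ 2)
    (hnomon : ∀ u : Fin (n + 1) →₀ ℕ, monomial u (1 : ℂ) ∉ J) :
    ∃ c : (Fin (n + 1) → ℤ) → ℂ,
      (∀ ℓ : Fin (n + 1) → ℤ, (∀ i : Fin d, ∑ j, W i j * ℓ j = 0) → c ℓ ≠ 0) ∧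
      J = Ideal.span {g | ∃ ℓ : Fin (n + 1) → ℤ,
        (∀ i : Fin d, ∑ j, W i j * ℓ j = 0) ∧
        g = monomial (Finsupp.equivFunOnFinite.symm fun j => (ℓ j).toNat) (1 : ℂ)
          - monomial (Finsupp.equivFunOnFinite.symm fun j => (-ℓ j).toNat) (c ℓ)} := by

  classical
  obtain ⟨w, hJI⟩ := hJ
  obtain ⟨S, hS, hS2⟩ := hbin
  have hnm : ∀ u : Fin (n + 1) →₀ ℕ, ∀ a : ℂ, monomial u a ∈ J → a = 0 := by
    intro u a h
    by_contra ha
    apply hnomon u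
    have := J.mul_mem_left (C a⁻¹) h
    rwa [C_mul_monomial, inv_mul_cancel₀ ha] at this
  let K := FractionRing (MvPolynomial (Fin (n + 1)) ℂ ⧸ J)
  let ψ : MvPolynomial (Fin (n + 1)) ℂ →ₐ[ℂ] K :=
    (IsScalarTower.toAlgHom ℂ (MvPolynomial (Fin (n + 1)) ℂ ⧸ J) K).comp (Ideal.Quotient.mkₐ ℂ J)
  have hψ : ∀ f, ψ f = 0 ↔ f ∈ J := by
    intro f
    have : ψ f = algebraMap (MvPolynomial (Fin (n + 1)) ℂ ⧸ J) K (Ideal.Quotient.mk J f) := rfl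
    rw [this, FaithfulSMul.algebraMap_eq_zero_iff, Ideal.Quotient.eq_zero_iff_mem]
  have hy : ∀ j, ψ (X j) ≠ 0 := by
    intro j h
    exact one_ne_zero (hnm _ _ ((hψ _).1 h))
  clear_value ψ
  -- the positive and negative parts
  let pp : (Fin (n + 1) → ℤ) → (Fin (n + 1) →₀ ℕ) := fun ℓ =>
    Finsupp.equivFunOnFinite.symm fun j => (ℓ j).toNat
  let pm : (Fin (n + 1) → ℤ) → (Fin (n + 1) →₀ ℕ) := fun ℓ =>
    Finsupp.equivFunOnFinite.symm fun j => (-ℓ j).toNat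
  have hpp : ∀ ℓ j, pp ℓ j = (ℓ j).toNat := fun ℓ j => rfl
  have hpm : ∀ ℓ j, pm ℓ j = (-ℓ j).toNat := fun ℓ j => rfl
  have hpd : ∀ ℓ j, ℓ j = (pp ℓ j : ℤ) - (pm ℓ j : ℤ) := by
    intro ℓ j; rw [hpp, hpm]; omega
  have hmem : ∀ ℓ c, lm (fun j => ψ (X j)) ℓ = algebraMap ℂ K c →
      monomial (pp ℓ) (1 : ℂ) + monomial (pm ℓ) (-c) ∈ J := by
    intro ℓ c h
    rw [← hψ, binom_iff ψ hy _ _ ℓ (hpd ℓ) 1 (-c) one_ne_zero, h]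
    simp
  have hwt : ∀ (u v : Fin (n + 1) →₀ ℕ) (a b : ℂ), a ≠ 0 → b ≠ 0 →
      monomial u a + monomial v b ∈ J → ∀ i, ∑ j, W i j * ((u j : ℤ) - v j) = 0 := by
    intro u v a b ha hb h i
    have h1 := wt_eq_of_binomial _ J (hJW i).le hnm u v a b hb h
    have h2 := wt_eq_of_binomial _ J (hJW i).le hnm v u b a ha (by rwa [add_comm (monomial v b)])
    have h3 := le_antisymm h1 h2
    unfold wt at h3
    rw [← sub_eq_zero, ← Finset.sum_sub_distrib] at h3
    have h4 : ((∑ j, W i j * ((u j : ℤ) - v j) : ℤ) : ℝ) = 0 := by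
      rw [← h3]; push_cast
      exact Finset.sum_congr rfl fun j _ => by ring
    exact_mod_cast h4
  have hHL : ∀ ℓ c, lm (fun j => ψ (X j)) ℓ = algebraMap ℂ K c → ∀ i, ∑ j, W i j * ℓ j = 0 := by
    intro ℓ c h i
    have hc : c ≠ 0 := by
      rintro rfl
      exact lm_ne _ hy ℓ (by simpa using h)
    have := hwt _ _ _ _ one_ne_zero (neg_ne_zero.2 hc) (hmem ℓ c h) i
    simpa only [← hpd] using this
  have hLH : ∀ ℓ : Fin (n + 1) → ℤ, (∀ i : Fin d, ∑ j, W i j * ℓ j = 0) →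
      ∃ c : ℂ, lm (fun j => ψ (X j)) ℓ = algebraMap ℂ K c := by
    intro ℓ hℓ
    rw [← mem_HQ_int _ hy]
    by_contra hnot
    have hlt : HQ _ hy < LinearMap.ker
        (Matrix.mulVecLin (Matrix.of fun i j => (W i j : ℚ))) := by
      refine lt_of_le_of_ne ?_ ?_
      · rintro x ⟨k, hk, ℓ', ⟨c, hc⟩, hx⟩
        rw [LinearMap.mem_ker]
        ext i
        have h1 := hHL ℓ' c hc i
        have h2 : (k : ℚ) * ∑ j, (W i j : ℚ) * x j = 0 := by
          rw [Finset.mul_sum]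
          have : ((∑ j, W i j * ℓ' j : ℤ) : ℚ) = 0 := by exact_mod_cast h1
          rw [← this]
          push_cast
          refine Finset.sum_congr rfl fun j _ => ?_
          rw [← hx j]; ring
        have hk' : (k : ℚ) ≠ 0 := by exact_mod_cast hk.ne'
        simpa [Matrix.mulVec, dotProduct] using (mul_eq_zero.1 h2).resolve_left hk'
      · intro heq
        apply hnot
        rw [heq, LinearMap.mem_ker]
        ext i
        simp only [Matrix.mulVecLin_apply, Matrix.mulVec, dotProduct, Matrix.of_apply,
          Pi.zero_apply]
        exact_mod_cast hℓ i
    have h1 := Submodule.finrank_lt_finrank_of_lt hlt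
    have h2 := finrank_ker W hW
    have h3 := Submodule.finrank_quotient_add_finrank (HQ _ hy)
    rw [Module.finrank_fin_fun] at h3
    have h4 := finrank_le_dim I J w hJI ψ hψ hnm hy S hS hS2
    rw [hdim] at h4
    have h5 : Module.finrank ℚ ((Fin (n + 1) → ℚ) ⧸ HQ _ hy) ≤ d := by exact_mod_cast h4
    omega
  choose! c hc using hLH
  have hc0 : ∀ ℓ : Fin (n + 1) → ℤ, (∀ i : Fin d, ∑ j, W i j * ℓ j = 0) → c ℓ ≠ 0 := by
    intro ℓ hℓ h0
    have := hc ℓ hℓ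
    rw [h0, map_zero] at this
    exact lm_ne _ hy ℓ this
  refine ⟨c, hc0, le_antisymm ?_ ?_⟩
  · conv_lhs => rw [hS]
    rw [Ideal.span_le]
    intro g hg
    have hgJ : g ∈ J := hS ▸ Ideal.subset_span hg
    rcases binomial_cases J hnm g hgJ (hS2 g hg) with rfl | ⟨u, v, a, b, ha, hb, rfl⟩
    · exact zero_mem _
    · have hL := hwt u v a b ha hb hgJ
      have h1 := (binom_iff ψ hy u v (fun j => (u j : ℤ) - v j) (fun j => rfl) a b ha).1
        ((hψ _).2 hgJ)
      rw [hc _ hL] at h1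
      have h2 : c (fun j => (u j : ℤ) - v j) = -b / a := (algebraMap ℂ K).injective h1
      set ℓ : Fin (n + 1) → ℤ := fun j => (u j : ℤ) - v j with hℓ
      have hu : u = (u - pp ℓ) + pp ℓ := by
        ext j
        simp only [Finsupp.add_apply, Finsupp.tsub_apply, hpp, hℓ]
        omega
      have hv : v = (u - pp ℓ) + pm ℓ := by
        ext j
        simp only [Finsupp.add_apply, Finsupp.tsub_apply, hpp, hpm, hℓ]
        omega
      have key : monomial u a + monomial v b =
          monomial (u - pp ℓ) a * (monomial (pp ℓ) (1 : ℂ) - monomial (pm ℓ) (c ℓ)) := by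
        rw [mul_sub, monomial_mul, monomial_mul, ← hu, ← hv, h2, mul_one, mul_div_cancel₀ _ ha,
          map_neg, sub_neg_eq_add]
      rw [key]
      exact Ideal.mul_mem_left _ _ (Ideal.subset_span ⟨ℓ, hL, rfl⟩)
  · rw [Ideal.span_le]
    rintro g ⟨ℓ, hℓ, rfl⟩
    have := hmem ℓ _ (hc ℓ hℓ)
    rwa [map_neg, ← sub_eq_add_neg] at this
end

section
/- For the weight vectors w^min = (0,2,2,1,0,1,1,2,1,2,0,1,1,1) and w^reg = (0,3,4,3,0,2,2,4,3,5,0,1,2,3) in ℝ^14 (the weight vectors associated to the FFLV polytope of Flag_4), one has init_{w^min}(I_4) = init_{w^reg}(I_4), and this initial ideal is a prime ideal generated by binomials. -/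
open MvPolynomial

/-- An ideal is binomial if it is generated by polynomials with at most two terms. -/
def IsBinomialIdeal {N : ℕ} (I : Ideal (MvPolynomial (Fin N) ℂ)) : Prop :=
  ∃ S : Set (MvPolynomial (Fin N) ℂ), I = Ideal.span S ∧ ∀ f ∈ S, f.support.card ≤ 2

/-- The Plücker minor: the determinant of the submatrix of the `r × c` matrix of
indeterminates `(x_{i,j})` with row indices `1, …, |J|` and column indices the elements
of `J` in increasing order. -/
noncomputable def pluckerMinor (r c : ℕ) (J : Finset (Fin c)) (h : J.card ≤ r) :
    MvPolynomial (Fin r × Fin c) ℂ :=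
  (Matrix.of fun a b : Fin J.card =>
    MvPolynomial.X (Fin.castLE h a, ((J.orderIsoOfFin rfl b : Fin c)))).det

/-- The 14 nonempty proper subsets of `{1,2,3,4}` in the order
`p₁,p₂,p₃,p₄,p₁₂,p₁₃,p₁₄,p₂₃,p₂₄,p₃₄,p₁₂₃,p₁₂₄,p₁₃₄,p₂₃₄`. -/
def subsets4 : Fin 14 → Finset (Fin 4) :=
  ![{0}, {1}, {2}, {3}, {0, 1}, {0, 2}, {0, 3}, {1, 2}, {1, 3}, {2, 3},
    {0, 1, 2}, {0, 1, 3}, {0, 2, 3}, {1, 2, 3}]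

lemma subsets4_card : ∀ i : Fin 14, (subsets4 i).card ≤ 3 := by decide

/-- The map `φ₄` sending each Plücker variable `p_J` to the corresponding minor of the
`3 × 4` matrix of indeterminates. -/
noncomputable def phi4 : MvPolynomial (Fin 14) ℂ →ₐ[ℂ] MvPolynomial (Fin 3 × Fin 4) ℂ :=
  MvPolynomial.aeval fun i => pluckerMinor 3 4 (subsets4 i) (subsets4_card i)

/-- The defining ideal `I₄` of the flag variety `Flag₄` in its Plücker embedding. -/
noncomputable def I4 : Ideal (MvPolynomial (Fin 14) ℂ) := RingHom.ker phi4.toRingHom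

namespace FFLV

abbrev R9 := MvPolynomial (Fin 9) ℂ

lemma pluckerMinor_eq (J : Finset (Fin 4)) (h : J.card ≤ 3) (k : ℕ) (hk : J.card = k)
    (hk3 : k ≤ 3) (e : Fin k → Fin 4) (he : StrictMono e) (hJ : ∀ i, e i ∈ J) :
    pluckerMinor 3 4 J h =
      (Matrix.of fun a b : Fin k => (X (Fin.castLE hk3 a, e b) : MvPolynomial (Fin 3 × Fin 4) ℂ)).det := by
  subst hk
  unfold pluckerMinor
  have := Finset.orderEmbOfFin_unique (s := J) rfl hJ he
  subst this
  rfl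

/-- Images of Plücker variables under evaluation at a matrix. -/
lemma eval_minor {S : Type*} [CommRing S] [Algebra ℂ S] (M : Fin 3 → Fin 4 → S) (i : Fin 14) :
    (aeval (fun p : Fin 3 × Fin 4 => M p.1 p.2)) (phi4 (X i)) =
    (![M 0 0, M 0 1, M 0 2, M 0 3,
      M 0 0 * M 1 1 - M 0 1 * M 1 0,
      M 0 0 * M 1 2 - M 0 2 * M 1 0,
      M 0 0 * M 1 3 - M 0 3 * M 1 0,
      M 0 1 * M 1 2 - M 0 2 * M 1 1,
      M 0 1 * M 1 3 - M 0 3 * M 1 1,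
      M 0 2 * M 1 3 - M 0 3 * M 1 2,
      (Matrix.of fun a b : Fin 3 => M a (![0,1,2] b)).det,
      (Matrix.of fun a b : Fin 3 => M a (![0,1,3] b)).det,
      (Matrix.of fun a b : Fin 3 => M a (![0,2,3] b)).det,
      (Matrix.of fun a b : Fin 3 => M a (![1,2,3] b)).det] : Fin 14 → S) i := by
  have h1 : ∀ (c : Fin 4) (J : Finset (Fin 4)) (h : J.card ≤ 3), J = {c} →
      (aeval (fun p : Fin 3 × Fin 4 => M p.1 p.2)) (pluckerMinor 3 4 J h) = M 0 c := by
    intro c J h hJ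
    rw [pluckerMinor_eq J h 1 (by simp [hJ]) (by norm_num) ![c]
      (Subsingleton.strictMono _) (by simp [hJ])]
    simp
  have h2 : ∀ (c d : Fin 4) (J : Finset (Fin 4)) (h : J.card ≤ 3), c < d → J = {c, d} →
      (aeval (fun p : Fin 3 × Fin 4 => M p.1 p.2)) (pluckerMinor 3 4 J h) =
        M 0 c * M 1 d - M 0 d * M 1 c := by
    intro c d J h hcd hJ
    rw [pluckerMinor_eq J h 2 (by rw [hJ, Finset.card_pair hcd.ne]) (by norm_num) ![c, d]
      (by intro a b hab; fin_cases a <;> fin_cases b <;> simp_all)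
      (by intro i; fin_cases i <;> simp [hJ])]
    simp [Matrix.det_fin_two]
  have h3 : ∀ (c d e : Fin 4) (J : Finset (Fin 4)) (h : J.card ≤ 3), c < d → d < e → J = {c, d, e} →
      (aeval (fun p : Fin 3 × Fin 4 => M p.1 p.2)) (pluckerMinor 3 4 J h) =
        (Matrix.of fun a b : Fin 3 => M a (![c,d,e] b)).det := by
    intro c d e J h hcd hde hJ
    rw [pluckerMinor_eq J h 3 (by
        rw [hJ, Finset.card_eq_three]
        exact ⟨c, d, e, hcd.ne, (hcd.trans hde).ne, hde.ne, rfl⟩) (by norm_num) ![c, d, e]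
      (by intro a b hab; have := hcd.trans hde; fin_cases a <;> fin_cases b <;> simp_all)
      (by intro i; fin_cases i <;> simp [hJ])]
    simp [Matrix.det_fin_three]
  unfold phi4
  rw [aeval_X]
  fin_cases i
  · exact h1 _ _ _ rfl
  · exact h1 _ _ _ rfl
  · exact h1 _ _ _ rfl
  · exact h1 _ _ _ rfl
  · exact h2 _ _ _ _ (by decide) rfl
  · exact h2 _ _ _ _ (by decide) rfl
  · exact h2 _ _ _ _ (by decide) rfl
  · exact h2 _ _ _ _ (by decide) rfl
  · exact h2 _ _ _ _ (by decide) rfl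
  · exact h2 _ _ _ _ (by decide) rfl
  · exact h3 _ _ _ _ _ (by decide) (by decide) rfl
  · exact h3 _ _ _ _ _ (by decide) (by decide) rfl
  · exact h3 _ _ _ _ _ (by decide) (by decide) rfl
  · exact h3 _ _ _ _ _ (by decide) (by decide) rfl

lemma phi4_X (i : Fin 14) : phi4 (X i) = (aeval (fun p : Fin 3 × Fin 4 =>
    (X (p.1, p.2) : MvPolynomial (Fin 3 × Fin 4) ℂ))) (phi4 (X i)) := by
  simp

/-! ### The toric ideal -/

/-- leading monomials -/
noncomputable def psiv : Fin 14 → R9 :=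
  ![X 0, X 0 * X 3, X 0 * X 4, X 0 * X 5,
    X 0 * X 1, X 0 * X 1 * X 6, X 0 * X 1 * X 7, -(X 0 * X 1 * X 4), -(X 0 * X 1 * X 5),
    -(X 0 * X 1 * X 5 * X 6),
    X 0 * X 1 * X 2, X 0 * X 1 * X 2 * X 8, -(X 0 * X 1 * X 2 * X 7), X 0 * X 1 * X 2 * X 5]

def Amat : Fin 14 → Fin 9 → ℕ :=
  ![![1,0,0,0,0,0,0,0,0], ![1,0,0,1,0,0,0,0,0], ![1,0,0,0,1,0,0,0,0], ![1,0,0,0,0,1,0,0,0],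
    ![1,1,0,0,0,0,0,0,0], ![1,1,0,0,0,0,1,0,0], ![1,1,0,0,0,0,0,1,0], ![1,1,0,0,1,0,0,0,0],
    ![1,1,0,0,0,1,0,0,0], ![1,1,0,0,0,1,1,0,0],
    ![1,1,1,0,0,0,0,0,0], ![1,1,1,0,0,0,0,0,1], ![1,1,1,0,0,0,0,1,0], ![1,1,1,0,0,1,0,0,0]]

noncomputable def eps : Fin 14 → ℂ := ![1,1,1,1,1,1,1,-1,-1,-1,1,1,-1,1]

noncomputable def Aexp (i : Fin 14) : Fin 9 →₀ ℕ := Finsupp.equivFunOnFinite.symm (Amat i)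

lemma eps_ne (i : Fin 14) : eps i ≠ 0 := by
  fin_cases i <;> simp [eps]

lemma monomial_eq9 (a : Fin 9 → ℕ) (c : ℂ) :
    (monomial (Finsupp.equivFunOnFinite.symm a) c : R9) = C c * ∏ j, X j ^ a j := by
  rw [monomial_eq, Finsupp.prod_fintype _ _ (by simp)]
  rfl

lemma psiv_eq (i : Fin 14) : psiv i = monomial (Aexp i) (eps i) := by
  rw [Aexp, monomial_eq9, Fin.prod_univ_castSucc, Fin.prod_univ_eight]
  fin_cases i <;> simp [psiv, Amat, eps, Fin.last, Fin.castSucc, Fin.castAdd, Fin.castLE]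

noncomputable def psi : MvPolynomial (Fin 14) ℂ →ₐ[ℂ] R9 := aeval psiv

noncomputable def Au (u : Fin 14 →₀ ℕ) : Fin 9 →₀ ℕ := ∑ i, u i • Aexp i

lemma psi_monomial (u : Fin 14 →₀ ℕ) :
    psi (monomial u 1) = monomial (Au u) (∏ i, eps i ^ u i) := by
  rw [psi, aeval_monomial, map_one, one_mul, Finsupp.prod_fintype _ _ (by simp)]
  simp_rw [psiv_eq, monomial_pow]
  rw [Au]
  rw [monomial_sum_prod]

lemma psi_monomial' (u : Fin 14 →₀ ℕ) (c : ℂ) :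
    psi (monomial u c) = monomial (Au u) (c * ∏ i, eps i ^ u i) := by
  have : (monomial u c : MvPolynomial (Fin 14) ℂ) = C c * monomial u 1 := by
    rw [C_mul_monomial, mul_one]
  rw [this, map_mul, psi_monomial, ← C_mul_monomial]
  congr 1
  exact psi.commutes c

def la : Fin 10 → Fin 14 := ![2, 3, 3, 3, 5, 3, 6, 8, 9, 6]
def lb : Fin 10 → Fin 14 := ![4, 4, 5, 7, 8, 10, 10, 10, 10, 13]
def lc : Fin 10 → Fin 14 := ![0, 0, 0, 2, 4, 0, 4, 4, 5, 8]
def ld : Fin 10 → Fin 14 := ![7, 8, 9, 8, 9, 13, 12, 13, 13, 12]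
noncomputable def sg : Fin 10 → ℂ := ![-1, -1, -1, 1, 1, 1, -1, -1, -1, 1]
def cw : Fin 14 → ℕ := ![0, 1, 2, 3, 1, 3, 3, 1, 0, 1, 6, 5, 3, 3]

lemma cw_lt (k : Fin 10) : cw (lc k) + cw (ld k) < cw (la k) + cw (lb k) := by
  revert k; decide

lemma la_ne_lb (k : Fin 10) : la k ≠ lb k := by revert k; decide

noncomputable def binom (k : Fin 10) : MvPolynomial (Fin 14) ℂ :=
  monomial (Finsupp.single (la k) 1 + Finsupp.single (lb k) 1) 1 -
    monomial (Finsupp.single (lc k) 1 + Finsupp.single (ld k) 1) (sg k)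

lemma binom_eq (k : Fin 10) : binom k = X (la k) * X (lb k) - C (sg k) * (X (lc k) * X (ld k)) := by
  simp only [binom, X, monomial_mul, C_mul_monomial, mul_one]

noncomputable def Jid : Ideal (MvPolynomial (Fin 14) ℂ) := Ideal.span (Set.range binom)

def Std (u : Fin 14 →₀ ℕ) : Prop := ∀ k, u (la k) = 0 ∨ u (lb k) = 0

lemma psi_binom (k : Fin 10) : psi (binom k) = 0 := by
  rw [binom_eq]
  have h : ∀ i, psi (X i) = psiv i := fun i => by simp [psi]
  have hC : ∀ c : ℂ, psi (C c) = C c := fun c => psi.commutes c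
  rw [map_sub, map_mul, map_mul, map_mul, h, h, h, h, hC]
  fin_cases k <;> simp [la, lb, lc, ld, sg, psiv] <;> ring

lemma Jid_le : Jid ≤ RingHom.ker psi := by
  rw [Jid, Ideal.span_le]
  rintro _ ⟨k, rfl⟩
  exact psi_binom k

noncomputable def cwt : (Fin 14 →₀ ℕ) →+ ℕ where
  toFun u := ∑ i, cw i * u i
  map_zero' := by simp
  map_add' u v := by simp [mul_add, Finset.sum_add_distrib]

lemma cwt_single (i : Fin 14) : cwt (Finsupp.single i 1) = cw i := by
  simp [cwt, Finsupp.single_apply]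

lemma normal_form (n : ℕ) : ∀ u : Fin 14 →₀ ℕ, cwt u = n → ∃ v c, Std v ∧
    (monomial u 1 - monomial v c : MvPolynomial (Fin 14) ℂ) ∈ Jid := by
  induction n using Nat.strong_induction_on with
  | _ n ih =>
    intro u hu
    by_cases hs : Std u
    · exact ⟨u, 1, hs, by simp⟩
    · unfold Std at hs
      push Not at hs
      obtain ⟨k, h1, h2⟩ := hs
      have hle : Finsupp.single (la k) 1 + Finsupp.single (lb k) 1 ≤ u := by
        intro i
        have := la_ne_lb k
        simp only [Finsupp.add_apply, Finsupp.single_apply]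
        split_ifs with ha hb hb
        · exact absurd (ha.trans hb.symm) this
        · subst ha; omega
        · subst hb; omega
        · omega
      obtain ⟨r, rfl⟩ := exists_add_of_le hle
      have hlt := cw_lt k
      obtain ⟨v, c, hv, hm⟩ := ih (cwt (Finsupp.single (lc k) 1 + Finsupp.single (ld k) 1 + r))
        (by
          rw [← hu]
          simp only [map_add, cwt_single]
          omega) _ rfl
      refine ⟨v, sg k * c, hv, ?_⟩
      have hb : binom k ∈ Jid := Ideal.subset_span ⟨k, rfl⟩
      have h3 := Jid.add_mem (Jid.mul_mem_left (monomial r 1) hb) (Jid.mul_mem_left (C (sg k)) hm)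
      convert h3 using 1
      simp only [binom, mul_sub, monomial_mul, C_mul_monomial, mul_one, one_mul]
      rw [add_comm r, add_comm r]
      ring

lemma normal_form_poly (f : MvPolynomial (Fin 14) ℂ) :
    ∃ g : MvPolynomial (Fin 14) ℂ, f - g ∈ Jid ∧ ∀ v ∈ g.support, Std v := by
  classical
  induction f using MvPolynomial.induction_on' with
  | monomial u a =>
    obtain ⟨v, c, hv, hm⟩ := normal_form _ u rfl
    refine ⟨monomial v (a * c), ?_, ?_⟩
    · have := Jid.mul_mem_left (C a) hm
      simpa [mul_sub, C_mul_monomial] using this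
    · intro w hw
      have := support_monomial_subset hw
      simp at this
      exact this ▸ hv
  | add p q hp hq =>
    obtain ⟨g, hg, hg'⟩ := hp
    obtain ⟨h, hh, hh'⟩ := hq
    refine ⟨g + h, ?_, ?_⟩
    · have := Jid.add_mem hg hh
      convert this using 1; ring
    · intro v hv
      rcases Finset.mem_union.1 (support_add hv) with h | h
      · exact hg' v h
      · exact hh' v h

lemma Au_apply (u : Fin 14 →₀ ℕ) (j : Fin 9) : Au u j = ∑ i, u i * Amat i j := by
  simp [Au, Aexp, Finsupp.finsetSum_apply]

/-- The twelve maximal faces of the triangulation. -/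
def Face (a2 a3 a4 a5 a6 a7 a8 a9 a10 a13 : ℕ) : Prop :=
  ((a4 = 0 ∧ a5 = 0 ∧ a7 = 0 ∧ a10 = 0) ∧ (a6 = 0 ∨ a13 = 0)) ∨
  ((a3 = 0 ∧ a10 = 0) ∧ (a2 = 0 ∨ a4 = 0) ∧ (a5 = 0 ∨ a8 = 0) ∧ (a6 = 0 ∨ a13 = 0)) ∨
  ((a3 = 0 ∧ a6 = 0 ∧ a8 = 0 ∧ a9 = 0) ∧ (a2 = 0 ∨ a4 = 0))

lemma std_face (u : Fin 14 →₀ ℕ) (hu : Std u) :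
    Face (u 2) (u 3) (u 4) (u 5) (u 6) (u 7) (u 8) (u 9) (u 10) (u 13) := by
  have h0 : u 2 = 0 ∨ u 4 = 0 := hu 0
  have h1 : u 3 = 0 ∨ u 4 = 0 := hu 1
  have h2 : u 3 = 0 ∨ u 5 = 0 := hu 2
  have h3 : u 3 = 0 ∨ u 7 = 0 := hu 3
  have h4 : u 5 = 0 ∨ u 8 = 0 := hu 4
  have h5 : u 3 = 0 ∨ u 10 = 0 := hu 5
  have h6 : u 6 = 0 ∨ u 10 = 0 := hu 6
  have h7 : u 8 = 0 ∨ u 10 = 0 := hu 7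
  have h8 : u 9 = 0 ∨ u 10 = 0 := hu 8
  have h9 : u 6 = 0 ∨ u 13 = 0 := hu 9
  unfold Face
  by_cases h : u 3 = 0 <;> by_cases h' : u 10 = 0 <;> simp_all

set_option maxHeartbeats 4000000 in
lemma face_inj (a0 a1 a2 a3 a4 a5 a6 a7 a8 a9 a10 a11 a12 a13
    b0 b1 b2 b3 b4 b5 b6 b7 b8 b9 b10 b11 b12 b13 : ℕ)
    (ha : Face a2 a3 a4 a5 a6 a7 a8 a9 a10 a13) (hb : Face b2 b3 b4 b5 b6 b7 b8 b9 b10 b13)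
    (e0 : a0 + a1 + a2 + a3 + a4 + a5 + a6 + a7 + a8 + a9 + a10 + a11 + a12 + a13 =
      b0 + b1 + b2 + b3 + b4 + b5 + b6 + b7 + b8 + b9 + b10 + b11 + b12 + b13)
    (e1 : a4 + a5 + a6 + a7 + a8 + a9 + a10 + a11 + a12 + a13 =
      b4 + b5 + b6 + b7 + b8 + b9 + b10 + b11 + b12 + b13)
    (e2 : a10 + a11 + a12 + a13 = b10 + b11 + b12 + b13)
    (e3 : a1 = b1) (e4 : a2 + a7 = b2 + b7) (e5 : a3 + a8 + a9 + a13 = b3 + b8 + b9 + b13)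
    (e6 : a5 + a9 = b5 + b9) (e7 : a6 + a12 = b6 + b12) (e8 : a11 = b11) :
    a0 = b0 ∧ a1 = b1 ∧ a2 = b2 ∧ a3 = b3 ∧ a4 = b4 ∧ a5 = b5 ∧ a6 = b6 ∧ a7 = b7 ∧ a8 = b8 ∧
      a9 = b9 ∧ a10 = b10 ∧ a11 = b11 ∧ a12 = b12 ∧ a13 = b13 := by
  subst e3 e8
  rcases ha with ⟨⟨rfl, rfl, rfl, rfl⟩, rfl | rfl⟩ |
    ⟨⟨rfl, rfl⟩, rfl | rfl, rfl | rfl, rfl | rfl⟩ | ⟨⟨rfl, rfl, rfl, rfl⟩, rfl | rfl⟩ <;>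
  rcases hb with ⟨⟨rfl, rfl, rfl, rfl⟩, rfl | rfl⟩ |
    ⟨⟨rfl, rfl⟩, rfl | rfl, rfl | rfl, rfl | rfl⟩ | ⟨⟨rfl, rfl, rfl, rfl⟩, rfl | rfl⟩ <;>
  omega

lemma std_inj (u v : Fin 14 →₀ ℕ) (hu : Std u) (hv : Std v) (h : Au u = Au v) : u = v := by
  have hA : ∀ j, ∑ i, u i * Amat i j = ∑ i, v i * Amat i j := by
    intro j; rw [← Au_apply, ← Au_apply, h]
  simp only [Fin.sum_univ_succ, Fin.sum_univ_zero] at hA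
  have key := face_inj (u 0) (u 1) (u 2) (u 3) (u 4) (u 5) (u 6) (u 7) (u 8) (u 9) (u 10) (u 11)
    (u 12) (u 13) (v 0) (v 1) (v 2) (v 3) (v 4) (v 5) (v 6) (v 7) (v 8) (v 9) (v 10) (v 11)
    (v 12) (v 13) (std_face u hu) (std_face v hv)
    (by have := hA 0; simp [Amat, -add_left_inj, -add_right_inj] at this; grind)
    (by have := hA 1; simp [Amat, -add_left_inj, -add_right_inj] at this; grind)
    (by have := hA 2; simp [Amat, -add_left_inj, -add_right_inj] at this; grind)
    (by have := hA 3; simpa [Amat, add_assoc] using this)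
    (by have := hA 4; simpa [Amat, add_assoc] using this)
    (by have := hA 5; simpa [Amat, add_assoc] using this)
    (by have := hA 6; simpa [Amat, add_assoc] using this)
    (by have := hA 7; simpa [Amat, add_assoc] using this)
    (by have := hA 8; simpa [Amat, add_assoc] using this)
  obtain ⟨k0, k1, k2, k3, k4, k5, k6, k7, k8, k9, k10, k11, k12, k13⟩ := key
  ext i
  fin_cases i <;> assumption

lemma ker_le : RingHom.ker psi ≤ Jid := by
  classical
  intro f hf
  obtain ⟨g, hg, hs⟩ := normal_form_poly f
  have hg0 : psi g = 0 := by
    have h1 := Jid_le hg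
    rw [RingHom.mem_ker] at h1 hf
    rw [map_sub, hf] at h1
    simpa using h1
  suffices g = 0 by simpa [this] using hg
  by_contra hne
  obtain ⟨v, hv⟩ := (MvPolynomial.support_nonempty).2 hne
  have h2 : coeff (Au v) (psi g) = coeff v g * ∏ i, eps i ^ v i := by
    conv_lhs => rw [g.as_sum, map_sum]
    rw [coeff_sum, Finset.sum_eq_single v]
    · rw [psi_monomial', coeff_monomial, if_pos rfl]
    · intro u hu huv
      rw [psi_monomial', coeff_monomial, if_neg]
      exact fun h => huv (std_inj u v (hs u hu) (hs v hv) h)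
    · exact fun h => absurd hv h
  rw [hg0, coeff_zero] at h2
  have h3 : ∏ i, eps i ^ v i ≠ 0 := Finset.prod_ne_zero_iff.2 fun i _ => pow_ne_zero _ (eps_ne i)
  exact mul_ne_zero (mem_support_iff.1 hv) h3 h2.symm

/-! ### Initial forms -/

lemma coeff_initialForm {N : ℕ} (w : Fin N → ℝ) (f : MvPolynomial (Fin N) ℂ) (u : Fin N →₀ ℕ)
    (c : ℝ) (hc : ∀ v ∈ f.support, c ≤ wt w v) (hc' : ∃ v ∈ f.support, wt w v = c) :
    coeff u (initialForm w f) = (open Classical in if wt w u = c then coeff u f else 0) := by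
  classical
  have key : ∀ v ∈ f.support, ((∀ v' ∈ f.support, wt w v ≤ wt w v') ↔ wt w v = c) := by
    intro v hv
    obtain ⟨v0, hv0, rfl⟩ := hc'
    exact ⟨fun h => le_antisymm (h _ hv0) (hc _ hv), fun h => h ▸ hc⟩
  unfold initialForm
  rw [coeff_sum]
  by_cases hu : u ∈ f.support
  · rw [Finset.sum_eq_single u]
    · by_cases h : wt w u = c
      · rw [if_pos ((key u hu).2 h), if_pos h, coeff_monomial, if_pos rfl]
      · rw [if_neg (fun h' => h ((key u hu).1 h')), if_neg h, coeff_zero]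
    · intro b _ hb
      split_ifs
      · rw [coeff_monomial, if_neg hb]
      · simp
    · exact fun h => absurd hu h
  · rw [notMem_support_iff.1 hu, ite_self]
    refine Finset.sum_eq_zero fun b hb => ?_
    split_ifs
    · rw [coeff_monomial, if_neg]
      rintro rfl; exact hu hb
    · simp

lemma initialForm_add {N : ℕ} (w : Fin N → ℝ) (g h : MvPolynomial (Fin N) ℂ) (c : ℝ)
    (hg0 : g ≠ 0) (hg : ∀ u ∈ g.support, wt w u = c) (hh : ∀ u ∈ h.support, c < wt w u) :
    initialForm w (g + h) = g ∧ g + h ≠ 0 := by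
  classical
  obtain ⟨v, hv⟩ := (MvPolynomial.support_nonempty).2 hg0
  have hhz : ∀ u, wt w u = c → coeff u h = 0 := by
    intro u hu
    by_contra h0
    exact (hh u (mem_support_iff.2 h0)).ne' hu
  have hvm : v ∈ (g + h).support := by
    rw [mem_support_iff, coeff_add, hhz v (hg v hv), add_zero]
    exact mem_support_iff.1 hv
  refine ⟨?_, (MvPolynomial.support_nonempty).1 ⟨v, hvm⟩⟩
  ext u
  rw [coeff_initialForm w (g + h) u c _ ⟨v, hvm, hg v hv⟩]
  · split_ifs with hu
    · rw [coeff_add, hhz u hu, add_zero]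
    · by_contra h0
      exact hu (hg u (mem_support_iff.2 (Ne.symm h0)))
  · intro u hu
    rcases Finset.mem_union.1 (support_add hu) with h | h
    · exact (hg u h).ge
    · exact (hh u h).le

/-- Direction A. -/
lemma init_le (w : Fin 14 → ℝ) (n : Fin 14 → ℕ) (hw : ∀ i, w i = n i)
    (chi : MvPolynomial (Fin 14) ℂ →ₐ[ℂ] Polynomial R9)
    (hchi : ∀ f ∈ I4, chi f = 0)
    (hq : ∀ i, ∃ q, chi (X i) = Polynomial.X ^ n i * (Polynomial.C (psiv i) + Polynomial.X * q)) :
    initialIdeal w I4 ≤ RingHom.ker psi := by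
  classical
  choose q hq using hq
  have hwt : ∀ u, wt w u = ((∑ i, n i * u i : ℕ) : ℝ) := by
    intro u; simp [wt, hw]
  have hmon : ∀ u c, ∃ r, chi (monomial u c) = Polynomial.X ^ (∑ i, n i * u i) *
      (Polynomial.C (psi (monomial u c)) + Polynomial.X * r) := by
    intro u c
    have e1 : chi (monomial u c) = Polynomial.X ^ (∑ i, n i * u i) *
        (algebraMap ℂ (Polynomial R9) c * ∏ i, (Polynomial.C (psiv i) + Polynomial.X * q i) ^ u i) := by
      have hc : chi = aeval (fun i => chi (X i)) := by ext i; simp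
      rw [hc, aeval_monomial, Finsupp.prod_fintype _ _ (by simp)]
      simp_rw [hq, mul_pow, Finset.prod_mul_distrib, ← pow_mul, Finset.prod_pow_eq_pow_sum]
      ring
    have e2 : Polynomial.X ∣ (algebraMap ℂ (Polynomial R9) c *
        ∏ i, (Polynomial.C (psiv i) + Polynomial.X * q i) ^ u i) - Polynomial.C (psi (monomial u c)) := by
      rw [Polynomial.X_dvd_iff, Polynomial.coeff_zero_eq_eval_zero]
      rw [psi, aeval_monomial, Finsupp.prod_fintype _ _ (by simp)]
      simp [Polynomial.eval_prod]
    obtain ⟨r, hr⟩ := e2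
    exact ⟨r, by rw [e1, ← hr]; ring⟩
  unfold initialIdeal
  rw [Ideal.span_le]
  rintro _ ⟨f, hf, hf0, rfl⟩
  obtain ⟨v, hv, hmin⟩ := Finset.exists_min_image f.support (fun u => ∑ i, n i * u i)
    ((MvPolynomial.support_nonempty).2 hf0)
  set c := ∑ i, n i * v i with hc
  have h0 := hchi f hf
  have h1 : (chi f).coeff c = psi (initialForm w f) := by
    have e : initialForm w f = ∑ u ∈ f.support,
        if (∑ i, n i * u i) = c then monomial u (coeff u f) else 0 := by
      unfold initialForm
      refine Finset.sum_congr rfl fun u hu => ?_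
      simp only [hwt, Nat.cast_le]
      congr 1
      exact propext ⟨fun h => le_antisymm (h v hv) (hmin u hu), fun h => h ▸ hmin⟩
    rw [e, map_sum]
    conv_lhs => rw [f.as_sum, map_sum, Polynomial.finsetSum_coeff]
    refine Finset.sum_congr rfl fun u hu => ?_
    obtain ⟨r, hr⟩ := hmon u (coeff u f)
    rw [hr, Polynomial.coeff_X_pow_mul']
    have hcu := hmin u hu
    by_cases h : (∑ i, n i * u i) = c
    · rw [if_pos h, if_pos h.le, h]
      simp
    · rw [if_neg h, if_neg (by omega), map_zero]
  rw [h0, Polynomial.coeff_zero] at h1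
  exact h1.symm

/-- the matrix -/
noncomputable def Mat (a : Fin 9 → ℕ) : Fin 3 → Fin 4 → Polynomial R9 :=
  let x : Fin 9 → Polynomial R9 := fun i => Polynomial.X ^ a i * Polynomial.C (X i)
  ![![x 0, x 0 * x 3, x 0 * x 4, x 0 * x 5],
    ![0, x 1, x 1 * x 6, x 1 * x 7],
    ![0, 0, x 2, x 2 * x 8]]

noncomputable def chi (a : Fin 9 → ℕ) : MvPolynomial (Fin 14) ℂ →ₐ[ℂ] Polynomial R9 :=
  (aeval (fun p : Fin 3 × Fin 4 => Mat a p.1 p.2)).comp phi4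

lemma chi_I4 (a : Fin 9 → ℕ) (f) (hf : f ∈ I4) : chi a f = 0 := by
  have : phi4 f = 0 := hf
  rw [chi, AlgHom.comp_apply, this, map_zero]

noncomputable def qv : Fin 14 → Polynomial R9 :=
  let y : Fin 9 → Polynomial R9 := fun i => Polynomial.C (X i)
  ![0, 0, 0, 0, 0, 0, 0, y 0 * y 1 * y 3 * y 6, Polynomial.X * (y 0 * y 1 * y 3 * y 7),
    y 0 * y 1 * y 4 * y 7, 0, 0, y 0 * y 1 * y 2 * y 6 * y 8,
    Polynomial.X ^ 2 * (y 0 * y 1 * y 2 * y 3 * y 6 * y 8)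
      - Polynomial.X * (y 0 * y 1 * y 2 * y 3 * y 7) - Polynomial.X * (y 0 * y 1 * y 2 * y 4 * y 8)]

lemma init_min_le : initialIdeal ![0, 2, 2, 1, 0, 1, 1, 2, 1, 2, 0, 1, 1, 1] I4 ≤ RingHom.ker psi := by
  refine init_le _ ![0, 2, 2, 1, 0, 1, 1, 2, 1, 2, 0, 1, 1, 1]
    (by intro i; fin_cases i <;> simp) (chi ![0,0,0,2,2,1,1,1,1]) (chi_I4 _) ?_
  intro i
  rw [chi, AlgHom.comp_apply, eval_minor]
  refine ⟨qv i, ?_⟩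
  fin_cases i <;> simp [Mat, psiv, qv, Matrix.det_fin_three] <;> ring

lemma init_reg_le : initialIdeal ![0, 3, 4, 3, 0, 2, 2, 4, 3, 5, 0, 1, 2, 3] I4 ≤ RingHom.ker psi := by
  refine init_le _ ![0, 3, 4, 3, 0, 2, 2, 4, 3, 5, 0, 1, 2, 3]
    (by intro i; fin_cases i <;> simp) (chi ![0,0,0,3,4,3,2,2,1]) (chi_I4 _) ?_
  intro i
  rw [chi, AlgHom.comp_apply, eval_minor]
  refine ⟨qv i, ?_⟩
  fin_cases i <;> simp [Mat, psiv, qv, Matrix.det_fin_three] <;> ring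

/-! ### Direction B -/

def ha : Fin 10 → Fin 14 := ![1, 1, 2, 1, 6, 1, 5, 7, 7, 9]
def hb : Fin 10 → Fin 14 := ![5, 6, 6, 9, 7, 12, 11, 11, 12, 11]
def hc : Fin 10 → Fin 14 := ![1, 1, 2, 1, 6, 2, 5, 7, 7, 9]
def hd : Fin 10 → Fin 14 := ![5, 6, 6, 9, 7, 11, 11, 11, 12, 11]
noncomputable def s1 : Fin 10 → ℂ := ![-1, -1, -1, 1, -1, 1, -1, -1, -1, 1]
noncomputable def s2 : Fin 10 → ℂ := ![0, 0, 0, 0, 0, -1, 0, 0, 0, 0]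

noncomputable def rest (k : Fin 10) : MvPolynomial (Fin 14) ℂ :=
  monomial (Finsupp.single (ha k) 1 + Finsupp.single (hb k) 1) (s1 k) +
    monomial (Finsupp.single (hc k) 1 + Finsupp.single (hd k) 1) (s2 k)

lemma rest_eq (k : Fin 10) : rest k = C (s1 k) * (X (ha k) * X (hb k)) +
    C (s2 k) * (X (hc k) * X (hd k)) := by
  simp only [rest, X, monomial_mul, C_mul_monomial, mul_one]

lemma rel_mem (k : Fin 10) : binom k + rest k ∈ I4 := by
  change phi4 (binom k + rest k) = 0
  rw [binom_eq, rest_eq]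
  have hC : ∀ c : ℂ, phi4 (C c) = C c := fun c => phi4.commutes c
  simp only [map_add, map_sub, map_mul, hC]
  have hX := fun i => (phi4_X i).trans
    (eval_minor (fun a b => (X (a, b) : MvPolynomial (Fin 3 × Fin 4) ℂ)) i)
  simp only [hX]
  fin_cases k <;>
    simp [la, lb, lc, ld, ha, hb, hc, hd, sg, s1, s2, Matrix.det_fin_three] <;> ring

lemma wt_pair {N : ℕ} (w : Fin N → ℝ) (a b : Fin N) :
    wt w (Finsupp.single a 1 + Finsupp.single b 1) = w a + w b := by
  simp [wt, Finsupp.single_apply, mul_add, Finset.sum_add_distrib]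

lemma binom_ne (k : Fin 10) : binom k ≠ 0 := by
  classical
  intro h
  have := congrArg (coeff (Finsupp.single (la k) 1 + Finsupp.single (lb k) 1)) h
  rw [binom, coeff_sub, coeff_monomial, coeff_monomial, if_pos rfl, if_neg, coeff_zero] at this
  · simp at this
  · intro h'
    have h2 := congrArg cwt h'
    simp only [map_add, cwt_single] at h2
    exact (cw_lt k).ne h2

lemma Jid_le_init (w : Fin 14 → ℝ) (h1 : ∀ k, w (la k) + w (lb k) = w (lc k) + w (ld k))
    (h2 : ∀ k, w (lc k) + w (ld k) < w (ha k) + w (hb k))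
    (h3 : ∀ k, w (lc k) + w (ld k) < w (hc k) + w (hd k)) : Jid ≤ initialIdeal w I4 := by
  classical
  rw [Jid, Ideal.span_le]
  rintro _ ⟨k, rfl⟩
  obtain ⟨e, hne⟩ := initialForm_add w (binom k) (rest k) (w (lc k) + w (ld k)) (binom_ne k)
    (by
      intro u hu
      rcases Finset.mem_union.1 (support_sub _ _ _ hu) with h | h
      all_goals
        have h := support_monomial_subset h
        rw [Finset.mem_singleton] at h
        rw [h, wt_pair]
      exact h1 k)
    (by
      intro u hu
      rcases Finset.mem_union.1 (support_add hu) with h | h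
      all_goals
        have h := support_monomial_subset h
        rw [Finset.mem_singleton] at h
        rw [h, wt_pair]
      · exact h2 k
      · exact h3 k)
  exact Ideal.subset_span ⟨_, rel_mem k, hne, e.symm⟩

lemma init_min_eq : initialIdeal ![0, 2, 2, 1, 0, 1, 1, 2, 1, 2, 0, 1, 1, 1] I4 = Jid := by
  refine le_antisymm (init_min_le.trans ker_le) (Jid_le_init _ ?_ ?_ ?_) <;> intro k <;>
    fin_cases k <;> simp [la, lb, lc, ld, ha, hb, hc, hd] <;> norm_num

lemma init_reg_eq : initialIdeal ![0, 3, 4, 3, 0, 2, 2, 4, 3, 5, 0, 1, 2, 3] I4 = Jid := by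
  refine le_antisymm (init_reg_le.trans ker_le) (Jid_le_init _ ?_ ?_ ?_) <;> intro k <;>
    fin_cases k <;> simp [la, lb, lc, ld, ha, hb, hc, hd] <;> norm_num

lemma Jid_prime : Jid.IsPrime := by
  rw [le_antisymm Jid_le ker_le]
  exact RingHom.ker_isPrime _

lemma Jid_binomial : IsBinomialIdeal Jid := by
  classical
  refine ⟨Set.range binom, rfl, ?_⟩
  rintro _ ⟨k, rfl⟩
  refine (Finset.card_le_card (support_sub _ _ _)).trans ((Finset.card_union_le _ _).trans ?_)
  have h := fun (u : Fin 14 →₀ ℕ) (c : ℂ) =>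
    Finset.card_le_card (support_monomial_subset (s := u) (a := c))
  simp only [Finset.card_singleton] at h
  exact Nat.add_le_add (h _ _) (h _ _)

end FFLV

/-- For the weight vectors `w^min` and `w^reg` associated to the FFLV polytope of `Flag₄`,
the initial ideals agree and are binomial prime ideals. -/
theorem fflv4_initial_ideal_prime_binomial :
    initialIdeal ![0, 2, 2, 1, 0, 1, 1, 2, 1, 2, 0, 1, 1, 1] I4 =
      initialIdeal ![0, 3, 4, 3, 0, 2, 2, 4, 3, 5, 0, 1, 2, 3] I4 ∧
    (initialIdeal ![0, 2, 2, 1, 0, 1, 1, 2, 1, 2, 0, 1, 1, 1] I4).IsPrime ∧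
    IsBinomialIdeal (initialIdeal ![0, 2, 2, 1, 0, 1, 1, 2, 1, 2, 0, 1, 1, 1] I4) := by
  rw [FFLV.init_min_eq, FFLV.init_reg_eq]
  exact ⟨rfl, FFLV.Jid_prime, FFLV.Jid_binomial⟩
end
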